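/- Let QC₁₂ ⊆ GF(4)¹² be the dodecacode, the GF(2)-linear span of the twelve vectors (0,0,0,0,0,0,1,1,1,1,1,1), (0,0,0,0,0,0,ω,ω,ω,ω,ω,ω), (1,1,1,1,1,1,0,0,0,0,0,0), (ω,ω,ω,ω,ω,ω,0,0,0,0,0,0), (0,0,0,1,ω,ω̄,0,0,0,1,ω,ω̄), (0,0,0,ω,ω̄,1,0,0,0,ω,ω̄,1), (1,ω̄,ω,0,0,0,1,ω̄,ω,0,0,0), (ω,1,ω̄,0,0,0,ω,1,ω̄,0,0,0), (0,0,0,1,ω̄,ω,ω,ω̄,1,0,0,0), (0,0,0,ω,1,ω̄,1,ω,ω̄,0,0,0), (1,ω,ω̄,0,0,0,0,0,0,ω̄,ω,1), (ω̄,1,ω,0,0,0,0,0,0,1,ω̄,ω). For every coordinate j ∈ {0, …, 11} and every nonzero a ∈ GF(4): exactly 66 codewords c ∈ QC₁₂ satisfy wt(c) = 6 and c_j = a; exactly 330 satisfy wt(c) = 8 and c_j = a; exactly 550 satisfy wt(c) = 10 and c_j = a; and exactly 78 satisfy wt(c) = 12 and c_j = a. (That is, μᵢ(6, e1) = 66,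 μᵢ(8, e1) = 330, μᵢ(10, e1) = 550, μᵢ(12, e1) = 78 for every weight-1 vector e1.) -/

import Mathlib

/-!
The dodecacode has only `2 ^ 12` words, so the counts are a finite computation; the work is in
transporting it to a form the kernel evaluates quickly.

A word over `GF(4)` is encoded by a natural number whose `i`-th base-4 digit stands for the `i`-th
coordinate, via `0, 1, 2, 3 ↦ 0, 1, ω, ω + 1` (`word`). Addition of words is then bitwise xor
(`word_xor`), so the `GF(2)`-span of the generators is the image of the list `xorSpan codeGens` of
all xors of encoded generators (`mem_span_word`). This list has no repetitions because no generator
lies in the xor span of the ones after it (`indep_check`), and `word` is injective on numbers below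
`4 ^ 12`; hence each cardinality in the theorem is the number of list elements with a prescribed
weight and a prescribed digit.

All these numbers are read off from a single sum per coordinate: with `B = 8192` exceeding the
number of words, the sum of `B ^ (4 * weight + digit)` over the code has the wanted counts as its
base-`B` digits (`count_of_sum_pow`). `enumerator_check` evaluates this sum, which turns out to be
independent of the coordinate.
-/

/-- `GF(4)`, the field with 4 elements. -/
abbrev F4 := GaloisField 2 2

/-- The trace map `Tr : GF(4) → GF(2)`, `Tr(x) = x + x²` (valued in the prime subfield). -/
noncomputable def tr (x : F4) : F4 := x + x ^ 2

/-- The conjugate `ȳ = y²` of an element of `GF(4)`. -/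
noncomputable def conj (x : F4) : F4 := x ^ 2

/-- The Hamming weight: the number of nonzero coordinates. -/
noncomputable def wt {n : ℕ} (c : Fin n → F4) : ℕ := {i | c i ≠ 0}.ncard

/-- The dodecacode `QC₁₂`: the `GF(2)`-linear span of the twelve listed generators,
where `ω̄ = ω²`. -/
noncomputable def dodecacode (ω : F4) : Submodule (ZMod 2) (Fin 12 → F4) :=
  Submodule.span (ZMod 2)
    { ![0,0,0,0,0,0,1,1,1,1,1,1],
      ![0,0,0,0,0,0,ω,ω,ω,ω,ω,ω],
      ![1,1,1,1,1,1,0,0,0,0,0,0],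
      ![ω,ω,ω,ω,ω,ω,0,0,0,0,0,0],
      ![0,0,0,1,ω,ω^2,0,0,0,1,ω,ω^2],
      ![0,0,0,ω,ω^2,1,0,0,0,ω,ω^2,1],
      ![1,ω^2,ω,0,0,0,1,ω^2,ω,0,0,0],
      ![ω,1,ω^2,0,0,0,ω,1,ω^2,0,0,0],
      ![0,0,0,1,ω^2,ω,ω,ω^2,1,0,0,0],
      ![0,0,0,ω,1,ω^2,1,ω,ω^2,0,0,0],
      ![1,ω,ω^2,0,0,0,0,0,0,ω^2,ω,1],
      ![ω^2,1,ω,0,0,0,0,0,0,1,ω^2,ω] }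

/-! ### Evaluation of the enumerator on base-4 encodings -/

/-- The `i`-th base-4 digit of `n`. -/
def digit (n i : ℕ) : ℕ := n / 4 ^ i % 4

/-- The number of nonzero digits among the lowest `k` base-4 digits of `n`; the truncated
expression `1 - (1 - d)` is `0` for `d = 0` and `1` otherwise. -/
def digitWt (n : ℕ) : ℕ → ℕ
  | 0 => 0
  | k + 1 => digitWt n k + (1 - (1 - digit n k))

/-- The base-4 encodings of the twelve generators, the coordinate `0` being the lowest digit. -/
def codeGens : List ℕ :=
  [5591040, 11182080, 1365, 2730, 14945856, 7866240, 184365, 221238, 125760, 236928,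
    7077945, 11796519]

/-- All xors of sublists of a list, one entry for each sublist. -/
def xorSpan : List ℕ → List ℕ
  | [] => [0]
  | g :: gs => xorSpan gs ++ (xorSpan gs).map (g ^^^ ·)

/-- The sum of `f (x ^^^ acc)` over `x` in `xorSpan gs`, computed along a binary tree so that the
list itself is never built. -/
def xorSum (f : ℕ → ℕ) : List ℕ → ℕ → ℕ
  | [], acc => f acc
  | g :: gs, acc => xorSum f gs acc + xorSum f gs (g ^^^ acc)

/-- Tests that no entry of the list lies in the xor span of the entries after it, i.e. that the
list is linearly independent over `GF(2)`. -/
def indepCheck : List ℕ → Bool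
  | [] => true
  | g :: gs => indepCheck gs && xorSum (fun n => bif n.beq g then 1 else 0) gs 0 == 0

theorem indep_check : indepCheck codeGens = true := by decide +kernel

/-- The joint enumerator of the weight and of the `j`-th digit over the code. Zero digits account
for the terms with coefficients `1`, `198`, `495` and `330`. -/
theorem enumerator_check : ∀ j : Fin 12,
    xorSum (fun n => 8192 ^ (4 * digitWt n 12 + digit n j)) codeGens 0 =
      1 + (198 + 66 * (8192 + 8192 ^ 2 + 8192 ^ 3)) * 8192 ^ 24
        + (495 + 330 * (8192 + 8192 ^ 2 + 8192 ^ 3)) * 8192 ^ 32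
        + (330 + 550 * (8192 + 8192 ^ 2 + 8192 ^ 3)) * 8192 ^ 40
        + (78 * (8192 + 8192 ^ 2 + 8192 ^ 3)) * 8192 ^ 48 := by
  decide +kernel

/-! ### Xor spans -/

theorem xorSum_eq (f : ℕ → ℕ) (gs : List ℕ) (acc : ℕ) :
    xorSum f gs acc = ((xorSpan gs).map fun x => f (x ^^^ acc)).sum := by
  induction gs generalizing acc with
  | nil => simp [xorSum, xorSpan]
  | cons g gs ih =>
    have h : ∀ x, x ^^^ (g ^^^ acc) = g ^^^ x ^^^ acc := fun x => by
      rw [← Nat.xor_assoc, Nat.xor_comm x g]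
    simp [xorSum, xorSpan, ih, h, Function.comp_def]

theorem xorSpan_xor_mem (gs : List ℕ) {x y : ℕ} (hx : x ∈ xorSpan gs) (hy : y ∈ xorSpan gs) :
    x ^^^ y ∈ xorSpan gs := by
  induction gs generalizing x y with
  | nil => simp_all [xorSpan]
  | cons g gs ih =>
    simp only [xorSpan, List.mem_append, List.mem_map] at hx hy ⊢
    rcases hx with hx | ⟨x, hx, rfl⟩ <;> rcases hy with hy | ⟨y, hy, rfl⟩
    · exact .inl (ih hx hy)
    · exact .inr ⟨x ^^^ y, ih hx hy, by rw [← Nat.xor_assoc, ← Nat.xor_assoc, Nat.xor_comm x g]⟩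
    · exact .inr ⟨x ^^^ y, ih hx hy, by rw [Nat.xor_assoc]⟩
    · refine .inl ?_
      have h : g ^^^ x ^^^ (g ^^^ y) = x ^^^ y := by
        rw [Nat.xor_comm g x, Nat.xor_assoc, Nat.xor_xor_cancel_left]
      rw [h]
      exact ih hx hy

theorem xorSpan_nodup (gs : List ℕ) (h : indepCheck gs = true) : (xorSpan gs).Nodup := by
  induction gs with
  | nil => simp [xorSpan]
  | cons g gs ih =>
    simp only [indepCheck, Bool.and_eq_true, beq_iff_eq] at h
    obtain ⟨h1, h2⟩ := h
    rw [xorSum_eq, List.sum_eq_zero_iff] at h2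
    have hg : g ∉ xorSpan gs := fun hg => by
      have := h2 _ (List.mem_map_of_mem hg)
      simp at this
    refine List.nodup_append'.2 ⟨ih h1, (ih h1).map fun a b hab => Nat.xor_right_injective hab, ?_⟩
    intro x hx hx'
    obtain ⟨y, hy, rfl⟩ := List.mem_map.1 hx'
    apply hg
    have := xorSpan_xor_mem gs hx hy
    rwa [Nat.xor_assoc, Nat.xor_self, Nat.xor_zero] at this

theorem xorSpan_lt (k : ℕ) (gs : List ℕ) (h : ∀ g ∈ gs, g < 2 ^ k) :
    ∀ x ∈ xorSpan gs, x < 2 ^ k := by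
  induction gs with
  | nil => simp [xorSpan]
  | cons g gs ih =>
    simp only [List.mem_cons, forall_eq_or_imp] at h
    intro x hx
    simp only [xorSpan, List.mem_append, List.mem_map] at hx
    rcases hx with hx | ⟨y, hy, rfl⟩
    · exact ih h.2 x hx
    · exact Nat.xor_lt_two_pow h.1 (ih h.2 y hy)

theorem xorSpan_length (gs : List ℕ) : (xorSpan gs).length = 2 ^ gs.length := by
  induction gs with
  | nil => rfl
  | cons g gs ih => simp [xorSpan, ih, pow_succ, mul_two]

/-! ### Counting by digits of a sum of powers -/

/-- When the base `B` exceeds the length of the list, adding up the powers `B ^ κ x` produces no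
carries, so the `k`-th digit of the sum is the number of `x` with `κ x = k`. -/
theorem count_of_sum_pow (B : ℕ) (κ : ℕ → ℕ) (l : List ℕ) (hl : l.length < B) (k : ℕ) :
    l.countP (fun x => κ x = k) = (l.map fun x => B ^ κ x).sum / B ^ k % B := by
  -- The terms with `κ x < k` sum to `r`, and `B * B ^ κ x ≤ B ^ k` for each of them.
  have key : ∀ l : List ℕ, ∃ u r, (l.map fun x => B ^ κ x).sum =
      r + B ^ k * (l.countP (fun x => κ x = k) + B * u) ∧ r * B ≤ l.length * B ^ k := by
    intro l
    induction l with
    | nil => exact ⟨0, 0, by simp⟩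
    | cons x l ih =>
      obtain ⟨u, r, h1, h2⟩ := ih
      rw [List.map_cons, List.sum_cons, h1, List.countP_cons, List.length_cons]
      rcases lt_trichotomy (κ x) k with h | h | h
      · refine ⟨u, B ^ κ x + r, by simp [h.ne]; ring, ?_⟩
        have h3 : B ^ κ x * B ≤ B ^ k := by
          rw [← pow_succ]
          exact Nat.pow_le_pow_right (by omega) h
        nlinarith
      · exact ⟨u, r, by simp [h]; ring, by nlinarith [Nat.zero_le (B ^ k)]⟩
      · obtain ⟨d, hd⟩ := Nat.exists_eq_add_of_lt h
        exact ⟨u + B ^ d, r, by simp [h.ne']; rw [hd]; ring, by nlinarith [Nat.zero_le (B ^ k)]⟩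
  obtain ⟨u, r, h1, h2⟩ := key l
  have hB : 0 < B ^ k := Nat.pow_pos (by omega)
  have hr : r < B ^ k := by
    by_contra! hcon
    have h3 : l.length * B ^ k < B * B ^ k := Nat.mul_lt_mul_of_pos_right hl hB
    nlinarith
  rw [h1, Nat.add_mul_div_left _ _ hB, Nat.div_eq_of_lt hr, zero_add, Nat.add_mul_mod_self_left,
    Nat.mod_eq_of_lt (List.countP_le_length.trans_lt hl)]

/-! ### Base-4 digits -/

theorem digit_lt (n i : ℕ) : digit n i < 4 := Nat.mod_lt _ (by norm_num)

theorem digit_xor (m n i : ℕ) : digit (m ^^^ n) i = digit m i ^^^ digit n i := by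
  have h : 4 ^ i = 2 ^ (2 * i) := by rw [pow_mul]; norm_num
  simp only [digit, h, Nat.xor_div_two_pow]
  exact Nat.xor_mod_two_pow (n := 2)

theorem eq_of_digit_eq {k m n : ℕ} (hm : m < 4 ^ k) (hn : n < 4 ^ k)
    (h : ∀ i < k, digit m i = digit n i) : m = n := by
  have key : ∀ l ≤ k, m % 4 ^ l = n % 4 ^ l := by
    intro l hl
    induction l with
    | zero => simp [Nat.mod_one]
    | succ l ih =>
      have := h l hl
      unfold digit at this
      rw [pow_succ, Nat.mod_mul, Nat.mod_mul, ih (by omega), this]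
  simpa [Nat.mod_eq_of_lt hm, Nat.mod_eq_of_lt hn] using key k le_rfl

theorem digitWt_eq (n k : ℕ) : digitWt n k = ∑ i : Fin k, if digit n i ≠ 0 then 1 else 0 := by
  induction k with
  | zero => simp [digitWt]
  | succ k ih =>
    rw [digitWt, ih, Fin.sum_univ_castSucc]
    congr 1
    simp only [Fin.val_last]
    split_ifs <;> omega

/-! ### Decoding to words over `GF(4)` -/

/-- The element of `GF(4)` encoded by a digit in `{0, 1, 2, 3}`. -/
noncomputable def sym (ω : F4) : ℕ → F4
  | 0 => 0
  | 1 => 1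
  | 2 => ω
  | _ => ω + 1

/-- The vector in `GF(4) ^ 12` encoded by the base-4 digits of `n`. -/
noncomputable def word (ω : F4) (n : ℕ) : Fin 12 → F4 := fun i => sym ω (digit n i)

theorem sym_xor (ω : F4) {a b : ℕ} (ha : a < 4) (hb : b < 4) :
    sym ω (a ^^^ b) = sym ω a + sym ω b := by
  have h2 : (2 : F4) = 0 := CharTwo.two_eq_zero
  interval_cases a <;> interval_cases b <;> simp [sym] <;> grind

theorem sym_injOn {ω : F4} (hω : ω ^ 2 = ω + 1) {a b : ℕ} (ha : a < 4) (hb : b < 4)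
    (h : sym ω a = sym ω b) : a = b := by
  have h2 : (2 : F4) = 0 := CharTwo.two_eq_zero
  have h1 : (1 : F4) ≠ 0 := one_ne_zero
  interval_cases a <;> interval_cases b <;> simp only [sym] at h <;> grind

theorem exists_sym {ω : F4} (hω : ω ^ 2 = ω + 1) (a : F4) (ha : a ≠ 0) :
    ∃ d, 1 ≤ d ∧ d < 4 ∧ sym ω d = a := by
  have h2 : (2 : F4) = 0 := CharTwo.two_eq_zero
  have : Fintype F4 := Fintype.ofFinite _
  have hc : Fintype.card F4 = 4 := by
    rw [← Nat.card_eq_fintype_card, GaloisField.card 2 2 (by norm_num)]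
    norm_num
  have h3 : a ^ 3 = 1 := by
    have := FiniteField.pow_card_sub_one_eq_one a ha
    rwa [hc] at this
  -- In characteristic two, `x ^ 3 - 1 = (x - 1) (x - ω) (x - (ω + 1))`.
  have h : (a - 1) * ((a - ω) * (a - (ω + 1))) = 0 := by
    grind
  rcases mul_eq_zero.1 h with h | h
  · exact ⟨1, by norm_num, by norm_num, (sub_eq_zero.1 h).symm⟩
  rcases mul_eq_zero.1 h with h | h
  · exact ⟨2, by norm_num, by norm_num, (sub_eq_zero.1 h).symm⟩
  · exact ⟨3, by norm_num, by norm_num, (sub_eq_zero.1 h).symm⟩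

theorem word_xor (ω : F4) (m n : ℕ) : word ω (m ^^^ n) = word ω m + word ω n := by
  funext i
  simp only [word, Pi.add_apply, digit_xor]
  exact sym_xor ω (digit_lt _ _) (digit_lt _ _)

theorem word_zero (ω : F4) : word ω 0 = 0 := by
  funext i
  simp [word, digit, sym]

theorem word_injOn {ω : F4} (hω : ω ^ 2 = ω + 1) {m n : ℕ} (hm : m < 4 ^ 12) (hn : n < 4 ^ 12)
    (h : word ω m = word ω n) : m = n :=
  eq_of_digit_eq hm hn fun i hi =>
    sym_injOn hω (digit_lt _ _) (digit_lt _ _) (congrFun h ⟨i, hi⟩)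

theorem wt_word {ω : F4} (hω : ω ^ 2 = ω + 1) (n : ℕ) : wt (word ω n) = digitWt n 12 := by
  have h : ∀ i : Fin 12, word ω n i ≠ 0 ↔ digit n i ≠ 0 := fun i =>
    not_congr ⟨fun h => sym_injOn hω (digit_lt _ _) (by norm_num) h,
      fun h => by simp [word, h, sym]⟩
  simp only [wt, h]
  rw [digitWt_eq, Finset.sum_boole, Set.ncard_eq_toFinset_card']
  simp

/-! ### The dodecacode as an xor span -/

theorem mem_span_word (ω : F4) (gs : List ℕ) (c : Fin 12 → F4) :
    c ∈ Submodule.span (ZMod 2) (word ω '' {g | g ∈ gs}) ↔ ∃ n ∈ xorSpan gs, word ω n = c := by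
  induction gs generalizing c with
  | nil => simp [xorSpan, word_zero, eq_comm]
  | cons g gs ih =>
    have h : {x | x ∈ g :: gs} = insert g {x | x ∈ gs} := by
      ext
      simp
    rw [h, Set.image_insert_eq, Submodule.mem_span_insert]
    simp only [ih, xorSpan, List.mem_append, List.mem_map]
    constructor
    · rintro ⟨t, _, ⟨n, hn, rfl⟩, rfl⟩
      have ht : t = 0 ∨ t = 1 := by revert t; decide
      rcases ht with rfl | rfl
      · exact ⟨n, .inl hn, by simp⟩
      · exact ⟨g ^^^ n, .inr ⟨n, hn, rfl⟩, by simp [word_xor]⟩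
    · rintro ⟨_, hn | ⟨n, hn, rfl⟩, rfl⟩
      · exact ⟨0, _, ⟨_, hn, rfl⟩, by simp⟩
      · exact ⟨1, _, ⟨_, hn, rfl⟩, by simp [word_xor]⟩

theorem mem_dodecacode {ω : F4} (hω : ω ^ 2 = ω + 1) (c : Fin 12 → F4) :
    c ∈ dodecacode ω ↔ ∃ n ∈ xorSpan codeGens, word ω n = c := by
  rw [← mem_span_word, dodecacode]
  have h : {g | g ∈ codeGens} = ({5591040, 11182080, 1365, 2730, 14945856, 7866240, 184365,
      221238, 125760, 236928, 7077945, 11796519} : Set ℕ) := by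
    ext
    simp [codeGens]
  have hw : ∀ n, word ω n = ![sym ω (digit n 0), sym ω (digit n 1), sym ω (digit n 2),
      sym ω (digit n 3), sym ω (digit n 4), sym ω (digit n 5), sym ω (digit n 6),
      sym ω (digit n 7), sym ω (digit n 8), sym ω (digit n 9), sym ω (digit n 10),
      sym ω (digit n 11)] := fun n => by
    funext i
    fin_cases i <;> rfl
  simp only [h, Set.image_insert_eq, Set.image_singleton, hw]
  norm_num [digit, sym, hω]

/-- Each count in the theorem is a base-8192 digit of the joint enumerator. -/
theorem ncard_eq {ω : F4} (hω : ω ^ 2 = ω + 1) (j : Fin 12) (k d : ℕ) (hd : d < 4) :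
    {c : Fin 12 → F4 | c ∈ dodecacode ω ∧ wt c = k ∧ c j = sym ω d}.ncard =
      xorSum (fun n => 8192 ^ (4 * digitWt n 12 + digit n j)) codeGens 0
        / 8192 ^ (4 * k + d) % 8192 := by
  have hset : {c : Fin 12 → F4 | c ∈ dodecacode ω ∧ wt c = k ∧ c j = sym ω d} = word ω ''
      ((xorSpan codeGens).filter fun n => 4 * digitWt n 12 + digit n j = 4 * k + d).toFinset := by
    have hkey : ∀ n, (wt (word ω n) = k ∧ word ω n j = sym ω d) ↔
        4 * digitWt n 12 + digit n j = 4 * k + d := fun n => by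
      have h4 := digit_lt n j
      have hs : word ω n j = sym ω d ↔ digit n j = d :=
        ⟨fun h => sym_injOn hω h4 hd h, fun h => by rw [word, h]⟩
      rw [wt_word hω, hs]
      omega
    ext c
    simp only [Set.mem_ofPred_eq, mem_dodecacode hω, Set.mem_image, Finset.mem_coe,
      List.mem_toFinset, List.mem_filter, decide_eq_true_eq]
    constructor
    · rintro ⟨⟨n, hn, rfl⟩, h⟩
      exact ⟨n, ⟨hn, (hkey n).1 h⟩, rfl⟩
    · rintro ⟨n, ⟨hn, h⟩, rfl⟩
      exact ⟨⟨n, hn, rfl⟩, (hkey n).2 h⟩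
  have hlt : ∀ n ∈ xorSpan codeGens, n < 4 ^ 12 :=
    xorSpan_lt 24 codeGens (by simp [codeGens])
  rw [hset, Set.InjOn.ncard_image, Set.ncard_coe_finset, List.toFinset_card_of_nodup,
    ← List.countP_eq_length_filter, count_of_sum_pow 8192, xorSum_eq]
  · simp only [Nat.xor_zero]
  · rw [xorSpan_length]
    simp [codeGens]
  · exact (xorSpan_nodup _ indep_check).filter _
  · intro m hm n hn h
    simp only [Finset.mem_coe, List.mem_toFinset, List.mem_filter] at hm hn
    exact word_injOn hω (hlt m hm.1) (hlt n hn.1) h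

/-- The codewords of each nonzero weight of the dodecacode form generalized 1-designs of
type 3: for every coordinate `j` and every nonzero `a ∈ GF(4)`, exactly 66 codewords of
weight 6, 330 of weight 8, 550 of weight 10, and 78 of weight 12 satisfy `c j = a`. -/
theorem dodecacode_generalized_one_design (ω : F4) (hω : ω ^ 2 = ω + 1)
    (j : Fin 12) (a : F4) (ha : a ≠ 0) :
    {c : Fin 12 → F4 | c ∈ dodecacode ω ∧ wt c = 6 ∧ c j = a}.ncard = 66 ∧
    {c : Fin 12 → F4 | c ∈ dodecacode ω ∧ wt c = 8 ∧ c j = a}.ncard = 330 ∧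
    {c : Fin 12 → F4 | c ∈ dodecacode ω ∧ wt c = 10 ∧ c j = a}.ncard = 550 ∧
    {c : Fin 12 → F4 | c ∈ dodecacode ω ∧ wt c = 12 ∧ c j = a}.ncard = 78 := by
  obtain ⟨d, hd1, hd4, rfl⟩ := exists_sym hω a ha
  simp only [ncard_eq hω j _ d hd4, enumerator_check j]
  interval_cases d <;> norm_num
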